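/- For every c > 0 and all x, y ∈ 𝔹ⁿ = {x ∈ ℝⁿ : |x| < 1} (n ≥ 2), the inequality min{1/(2c), 1/(1+c)}·T(x,y) ≤ |x−y|/(|x−y| + 2c·L(1−|x|, 1−|y|)) ≤ max{1, 1/c}·T(x,y) holds, where T(x,y) = |x−y|/√(|x−y|² + (1−|x|²)(1−|y|²)) and L is the logarithmic mean. -/

import Mathlib

/-- The logarithmic mean of two positive reals. -/
noncomputable def logMean (a b : ℝ) : ℝ :=
  if a = b then a else (a - b) / (Real.log a - Real.log b)

/-!
The denominator of `T(x, y)` is the Ahlfors bracket `A = √(|x - y|² + (1 - |x|²)(1 - |y|²))`.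
Writing `t = |x - y|` and `L` for the logarithmic mean of `1 - |x|` and `1 - |y|`, both bounds
follow from `t ≤ A`, `t + 2L ≤ 2A` and `A ≤ t + 2L`. The last two come from the position of `L`
between the geometric and the arithmetic mean; for `t + 2L ≤ 2A` it remains to show that `2A` is at
least `t + (1 - |x|) + (1 - |y|)`. Put `u = (|x| + |y| + t) / 2` and `v = (|x| + |y| - t) / 2`. By
the triangle inequality `0 ≤ u v ≤ |x| |y|`, whence `A ≥ 1 - u v`, with equality when `x` and `y`
lie on a common ray. If `u ≤ 1`, then `A ≥ 1 - v = (t + (1 - |x|) + (1 - |y|)) / 2`; if `u ≥ 1`,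
then already `t ≥ 1 - v`.
-/

theorem two_mul_sub_one_le_add_one_mul_log {r : ℝ} (hr : 1 ≤ r) :
    2 * (r - 1) ≤ (r + 1) * Real.log r := by
  have h := Real.le_log_one_add_of_nonneg (sub_nonneg.2 hr)
  rw [add_sub_cancel, div_le_iff₀ (by linarith)] at h
  linarith

theorem two_mul_log_le_sub_inv {u : ℝ} (hu : 1 ≤ u) : 2 * Real.log u ≤ u - u⁻¹ := by
  have h := Real.self_le_sinh_iff.2 (Real.log_nonneg hu)
  rw [Real.sinh_log (by linarith)] at h
  linarith

theorem logMean_self (a : ℝ) : logMean a a = a := if_pos rfl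

theorem logMean_of_ne {a b : ℝ} (h : a ≠ b) :
    logMean a b = (a - b) / (Real.log a - Real.log b) := if_neg h

theorem logMean_comm (a b : ℝ) : logMean a b = logMean b a := by
  rcases eq_or_ne a b with rfl | h
  · rfl
  · rw [logMean_of_ne h, logMean_of_ne h.symm, ← neg_sub b a, ← neg_sub (Real.log b),
      neg_div_neg_eq]

theorem logMean_le_add_div_two {a b : ℝ} (ha : 0 < a) (hb : 0 < b) :
    logMean a b ≤ (a + b) / 2 := by
  wlog hab : b ≤ a generalizing a b
  · rw [logMean_comm, add_comm]
    exact this hb ha (le_of_not_ge hab)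
  rcases hab.eq_or_lt with rfl | hlt
  · rw [logMean_self, add_self_div_two]
  rw [logMean_of_ne hlt.ne', div_le_iff₀ (sub_pos.2 (Real.log_lt_log hb hlt)),
    ← Real.log_div ha.ne' hb.ne']
  have h := two_mul_sub_one_le_add_one_mul_log ((one_le_div hb).2 hab)
  calc a - b = b / 2 * (2 * (a / b - 1)) := by field_simp
    _ ≤ b / 2 * ((a / b + 1) * Real.log (a / b)) := by gcongr
    _ = (a + b) / 2 * Real.log (a / b) := by field_simp

theorem sqrt_mul_le_logMean {a b : ℝ} (ha : 0 < a) (hb : 0 < b) :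
    √(a * b) ≤ logMean a b := by
  wlog hab : b ≤ a generalizing a b
  · rw [logMean_comm, mul_comm]
    exact this hb ha (le_of_not_ge hab)
  rcases hab.eq_or_lt with rfl | hlt
  · rw [logMean_self, Real.sqrt_mul_self hb.le]
  rw [logMean_of_ne hlt.ne', le_div_iff₀ (sub_pos.2 (Real.log_lt_log hb hlt)),
    ← Real.log_div ha.ne' hb.ne', Real.sqrt_mul ha.le]
  have : 0 < √a := Real.sqrt_pos.2 ha
  have hq : 0 < √b := Real.sqrt_pos.2 hb
  have log_eq : Real.log (a / b) = 2 * Real.log (√a / √b) := by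
    rw [← Real.sqrt_div ha.le, Real.log_sqrt (div_pos ha hb).le]
    ring
  have h := two_mul_log_le_sub_inv ((one_le_div hq).2 (Real.sqrt_le_sqrt hab))
  calc √a * √b * Real.log (a / b) ≤ √a * √b * (√a / √b - (√a / √b)⁻¹) := by
        rw [log_eq]
        gcongr
    _ = √a ^ 2 - √b ^ 2 := by field_simp
    _ = a - b := by rw [Real.sq_sqrt ha.le, Real.sq_sqrt hb.le]

theorem logMean_pos {a b : ℝ} (ha : 0 < a) (hb : 0 < b) : 0 < logMean a b :=
  (Real.sqrt_pos.2 (mul_pos ha hb)).trans_le (sqrt_mul_le_logMean ha hb)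

section AhlforsBracket

variable {E : Type*} [SeminormedAddGroup E] {x y : E}

/-- The Ahlfors bracket `A[x, y]`, through which the hyperbolic metric of the unit ball is given by
`th (ρ(x, y) / 2) = |x - y| / A[x, y]`. -/
noncomputable def ahlforsBracket (x y : E) : ℝ :=
  √(dist x y ^ 2 + (1 - ‖x‖ ^ 2) * (1 - ‖y‖ ^ 2))

theorem dist_le_ahlforsBracket (hx : ‖x‖ ≤ 1) (hy : ‖y‖ ≤ 1) :
    dist x y ≤ ahlforsBracket x y := by
  have hx' : 0 ≤ 1 - ‖x‖ ^ 2 := sub_nonneg.2 (pow_le_one₀ (norm_nonneg x) hx)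
  have hy' : 0 ≤ 1 - ‖y‖ ^ 2 := sub_nonneg.2 (pow_le_one₀ (norm_nonneg y) hy)
  exact Real.le_sqrt_of_sq_le (le_add_of_nonneg_right (mul_nonneg hx' hy'))

theorem ahlforsBracket_pos (hx : ‖x‖ < 1) (hy : ‖y‖ < 1) : 0 < ahlforsBracket x y := by
  have hx' : 0 < 1 - ‖x‖ ^ 2 := sub_pos.2 (pow_lt_one₀ (norm_nonneg x) hx two_ne_zero)
  have hy' : 0 < 1 - ‖y‖ ^ 2 := sub_pos.2 (pow_lt_one₀ (norm_nonneg y) hy two_ne_zero)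
  exact Real.sqrt_pos.2 (add_pos_of_nonneg_of_pos (sq_nonneg _) (mul_pos hx' hy'))

theorem ahlforsBracket_le_dist_add_two_mul_sqrt (hx : ‖x‖ ≤ 1) (hy : ‖y‖ ≤ 1) :
    ahlforsBracket x y ≤ dist x y + 2 * √((1 - ‖x‖) * (1 - ‖y‖)) := by
  set a := 1 - ‖x‖ with ha
  set b := 1 - ‖y‖ with hb
  have hab : 0 ≤ a * b := mul_nonneg (sub_nonneg.2 hx) (sub_nonneg.2 hy)
  have one_add_mul_le : (1 + ‖x‖) * (1 + ‖y‖) ≤ 2 * 2 := by gcongr <;> linarith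
  refine Real.sqrt_le_iff.2 ⟨by positivity, ?_⟩
  calc dist x y ^ 2 + (1 - ‖x‖ ^ 2) * (1 - ‖y‖ ^ 2)
      = dist x y ^ 2 + a * b * ((1 + ‖x‖) * (1 + ‖y‖)) := by rw [ha, hb]; ring
    _ ≤ dist x y ^ 2 + a * b * (2 * 2) := by gcongr
    _ = dist x y ^ 2 + (2 * √(a * b)) ^ 2 := by rw [mul_pow, Real.sq_sqrt hab]; ring
    _ ≤ (dist x y + 2 * √(a * b)) ^ 2 :=
        pow_add_pow_le dist_nonneg (by positivity) two_ne_zero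

theorem one_sub_norm_add_sq_sub_dist_sq_le_ahlforsBracket (x y : E) :
    1 - ((‖x‖ + ‖y‖) ^ 2 - dist x y ^ 2) / 4 ≤ ahlforsBracket x y := by
  set w := ((‖x‖ + ‖y‖) ^ 2 - dist x y ^ 2) / 4 with hw
  have dist_sq_le : dist x y ^ 2 ≤ (‖x‖ + ‖y‖) ^ 2 := by
    gcongr
    exact dist_le_norm_add_norm x y
  have norm_sub_sq_le : (‖x‖ - ‖y‖) ^ 2 ≤ dist x y ^ 2 := by
    have h := abs_dist_sub_le x y 0
    rw [dist_zero_right, dist_zero_right] at h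
    exact sq_le_sq.2 (h.trans (le_abs_self _))
  have : 0 ≤ w := by linarith
  have w_le : w ≤ ‖x‖ * ‖y‖ := by linarith
  apply Real.le_sqrt_of_sq_le
  calc (1 - w) ^ 2 = dist x y ^ 2 + (1 + w) ^ 2 - (‖x‖ + ‖y‖) ^ 2 := by rw [hw]; ring
    _ ≤ dist x y ^ 2 + (1 + ‖x‖ * ‖y‖) ^ 2 - (‖x‖ + ‖y‖) ^ 2 := by gcongr
    _ = dist x y ^ 2 + (1 - ‖x‖ ^ 2) * (1 - ‖y‖ ^ 2) := by ring

theorem dist_add_one_sub_norm_add_one_sub_norm_le_two_mul_ahlforsBracket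
    (hx : ‖x‖ ≤ 1) (hy : ‖y‖ ≤ 1) :
    dist x y + ((1 - ‖x‖) + (1 - ‖y‖)) ≤ 2 * ahlforsBracket x y := by
  rcases le_total 2 (‖x‖ + ‖y‖ + dist x y) with hu | hu
  · linarith [dist_le_ahlforsBracket hx hy]
  · have hv : 0 ≤ ‖x‖ + ‖y‖ - dist x y := sub_nonneg.2 (dist_le_norm_add_norm x y)
    have huv : 0 ≤ (‖x‖ + ‖y‖ - dist x y) * (2 - (‖x‖ + ‖y‖ + dist x y)) :=
      mul_nonneg hv (sub_nonneg.2 hu)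
    linarith [one_sub_norm_add_sq_sub_dist_sq_le_ahlforsBracket x y]

theorem dist_add_two_mul_logMean_le_two_mul_ahlforsBracket (hx : ‖x‖ < 1) (hy : ‖y‖ < 1) :
    dist x y + 2 * logMean (1 - ‖x‖) (1 - ‖y‖) ≤ 2 * ahlforsBracket x y := by
  linarith [logMean_le_add_div_two (sub_pos.2 hx) (sub_pos.2 hy),
    dist_add_one_sub_norm_add_one_sub_norm_le_two_mul_ahlforsBracket hx.le hy.le]

theorem ahlforsBracket_le_dist_add_two_mul_logMean (hx : ‖x‖ < 1) (hy : ‖y‖ < 1) :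
    ahlforsBracket x y ≤ dist x y + 2 * logMean (1 - ‖x‖) (1 - ‖y‖) := by
  linarith [sqrt_mul_le_logMean (sub_pos.2 hx) (sub_pos.2 hy),
    ahlforsBracket_le_dist_add_two_mul_sqrt hx.le hy.le]

end AhlforsBracket

section Scaling

variable {t l A c : ℝ}

theorem min_mul_add_two_mul_le (hc : 0 < c) (ht : 0 ≤ t) (hl : 0 ≤ l) (htA : t ≤ A)
    (hA : t + 2 * l ≤ 2 * A) :
    min (1 / (2 * c)) (1 / (1 + c)) * (t + 2 * c * l) ≤ A := by
  rcases le_total c 1 with hc1 | hc1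
  · calc min (1 / (2 * c)) (1 / (1 + c)) * (t + 2 * c * l)
        ≤ 1 / (1 + c) * ((1 - c) * t + c * (t + 2 * l)) := by
          rw [show t + 2 * c * l = (1 - c) * t + c * (t + 2 * l) by ring]
          gcongr
          exact min_le_right _ _
      _ ≤ 1 / (1 + c) * ((1 - c) * A + c * (2 * A)) := by gcongr
      _ = A := by
          field_simp
          ring
  · calc min (1 / (2 * c)) (1 / (1 + c)) * (t + 2 * c * l)
        ≤ 1 / (2 * c) * (c * t + 2 * c * l) := by
          gcongr
          · exact min_le_left _ _
          · exact le_mul_of_one_le_left ht hc1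
      _ = 1 / (2 * c) * (c * (t + 2 * l)) := by ring
      _ ≤ 1 / (2 * c) * (c * (2 * A)) := by gcongr
      _ = A := by field_simp

theorem le_max_mul_add_two_mul (hc : 0 < c) (ht : 0 ≤ t) (hl : 0 ≤ l) (hA : A ≤ t + 2 * l) :
    A ≤ max 1 (1 / c) * (t + 2 * c * l) := by
  have one_le_max_mul : 1 ≤ max 1 (1 / c) * c := by
    rw [← div_le_iff₀ hc]
    exact le_max_right _ _
  calc A ≤ 1 * t + 1 * (2 * l) := by linarith
    _ ≤ max 1 (1 / c) * t + max 1 (1 / c) * c * (2 * l) := by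
        gcongr
        exact le_max_left _ _
    _ = max 1 (1 / c) * (t + 2 * c * l) := by ring

end Scaling

theorem mul_div_le_div_of_mul_le {m t p q : ℝ} (ht : 0 ≤ t) (hp : 0 < p) (hq : 0 < q)
    (h : m * p ≤ q) : m * (t / q) ≤ t / p := by
  rw [← mul_div_assoc, div_le_div_iff₀ hq hp, mul_right_comm, mul_comm t q]
  gcongr

theorem div_le_mul_div_of_le_mul {m t p q : ℝ} (ht : 0 ≤ t) (hp : 0 < p) (hq : 0 < q)
    (h : q ≤ m * p) : t / p ≤ m * (t / q) := by
  rw [← mul_div_assoc, div_le_div_iff₀ hp hq, mul_right_comm, mul_comm t q]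
  gcongr

theorem stmt18_general {E : Type*} [SeminormedAddGroup E] {c : ℝ} (hc : 0 < c)
    {x y : E} (hx : ‖x‖ < 1) (hy : ‖y‖ < 1) :
    min (1 / (2 * c)) (1 / (1 + c)) * (dist x y / ahlforsBracket x y) ≤
      dist x y / (dist x y + 2 * c * logMean (1 - ‖x‖) (1 - ‖y‖)) ∧
    dist x y / (dist x y + 2 * c * logMean (1 - ‖x‖) (1 - ‖y‖)) ≤
      max 1 (1 / c) * (dist x y / ahlforsBracket x y) := by
  have ht : 0 ≤ dist x y := dist_nonneg
  have mean_pos := logMean_pos (sub_pos.2 hx) (sub_pos.2 hy)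
  have denom_pos : 0 < dist x y + 2 * c * logMean (1 - ‖x‖) (1 - ‖y‖) := by positivity
  have bracket_pos := ahlforsBracket_pos hx hy
  constructor
  · refine mul_div_le_div_of_mul_le ht denom_pos bracket_pos ?_
    exact min_mul_add_two_mul_le hc ht mean_pos.le (dist_le_ahlforsBracket hx.le hy.le)
      (dist_add_two_mul_logMean_le_two_mul_ahlforsBracket hx hy)
  · refine div_le_mul_div_of_le_mul ht denom_pos bracket_pos ?_
    exact le_max_mul_add_two_mul hc ht mean_pos.le
      (ahlforsBracket_le_dist_add_two_mul_logMean hx hy)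

theorem stmt18 (n : ℕ) (hn : 2 ≤ n) (c : ℝ) (hc : 0 < c)
    (x y : EuclideanSpace ℝ (Fin n)) (hx : ‖x‖ < 1) (hy : ‖y‖ < 1) :
    min (1 / (2 * c)) (1 / (1 + c)) *
        (dist x y / Real.sqrt (dist x y ^ 2 + (1 - ‖x‖ ^ 2) * (1 - ‖y‖ ^ 2))) ≤
      dist x y / (dist x y + 2 * c * logMean (1 - ‖x‖) (1 - ‖y‖)) ∧
    dist x y / (dist x y + 2 * c * logMean (1 - ‖x‖) (1 - ‖y‖)) ≤
      max 1 (1 / c) *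
        (dist x y / Real.sqrt (dist x y ^ 2 + (1 - ‖x‖ ^ 2) * (1 - ‖y‖ ^ 2))) :=
  stmt18_general hc hx hy
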